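/- On the region where y ≥ (a/(2t))(x - ct)² + b(x - ct) (so the minimizer is s* = 0), the function φ*(x,y,t) = min_{s≥0} [(-x+bs+ct)²/(4(t+as)) + (y+s)²/(4t)] equals ((x - c·t)² + y²)/(4t). -/

import Mathlib

open Set

/-!
The function `(v, w) ↦ v² / w` is convex on `w > 0`, so the objective, a sum of two of its
restrictions to lines, lies above its tangent line at `s = 0`. The region is exactly where the slope
of this tangent line is nonnegative.
-/

variable {K : Type*} [Field K] [LinearOrder K] [IsStrictOrderedRing K]

theorem two_mul_mul_sub_sq_mul_le_sq_div {w : K} (hw : 0 < w) (k v : K) :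
    2 * k * v - k ^ 2 * w ≤ v ^ 2 / w := by
  rw [le_div_iff₀ hw]
  linarith [sq_nonneg (v - k * w)]

theorem sq_div_tangent_le_sq_div {t α s : K} (ht : t ≠ 0) (hs : 0 < t + α * s) (u β : K) :
    u ^ 2 / t + (2 * (u / t) * β - (u / t) ^ 2 * α) * s ≤ (u + β * s) ^ 2 / (t + α * s) :=
  calc
    _ = 2 * (u / t) * (u + β * s) - (u / t) ^ 2 * (t + α * s) := by field_simp; ring
    _ ≤ _ := two_mul_mul_sub_sq_mul_le_sq_div hs (u / t) (u + β * s)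

theorem tangent_slope_nonneg_iff {t : K} (ht : 0 < t) (a b u y : K) :
    0 ≤ 2 * (u / t) * b - (u / t) ^ 2 * a + 2 * (y / t) ↔ a / (2 * t) * u ^ 2 - b * u ≤ y := by
  have slope_eq : 2 * (u / t) * b - (u / t) ^ 2 * a + 2 * (y / t) =
      2 / t * (y - (a / (2 * t) * u ^ 2 - b * u)) := by
    field_simp; ring
  rw [slope_eq, mul_nonneg_iff_of_pos_left (by positivity), sub_nonneg]

theorem add_sq_div_le_sq_div_add_sq_div {a b t u y s : K} (ht : 0 < t) (hs : 0 ≤ s)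
    (hts : 0 < t + a * s) (h : a / (2 * t) * u ^ 2 - b * u ≤ y) :
    (u ^ 2 + y ^ 2) / t ≤ (u + b * s) ^ 2 / (t + a * s) + (y + s) ^ 2 / t := by
  have tangent_u := sq_div_tangent_le_sq_div ht.ne' hts u b
  have tangent_y : y ^ 2 / t + 2 * (y / t) * s ≤ (y + s) ^ 2 / t := by
    simpa using sq_div_tangent_le_sq_div (α := 0) (s := s) ht.ne' (by simpa using ht) y 1
  have slope_mul_nonneg := mul_nonneg ((tangent_slope_nonneg_iff ht a b u y).mpr h) hs
  rw [add_div]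
  linarith

theorem stmt_5_general {a b c t x y : K} (ha : 0 ≤ a) (ht : 0 < t)
    (hreg : a / (2 * t) * (x - c * t) ^ 2 + b * (x - c * t) ≤ y) :
    IsLeast ((fun s : K =>
        (-x + b * s + c * t) ^ 2 / (4 * (t + a * s)) + (y + s) ^ 2 / (4 * t)) '' Ici 0)
      (((x - c * t) ^ 2 + y ^ 2) / (4 * t)) := by
  refine ⟨⟨0, self_mem_Ici, by ring⟩, ?_⟩
  rintro _ ⟨s, hs : 0 ≤ s, rfl⟩
  have hts : 0 < t + a * s := by positivity
  have hreg' : a / (2 * t) * (c * t - x) ^ 2 - b * (c * t - x) ≤ y := by linarith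
  calc
    ((x - c * t) ^ 2 + y ^ 2) / (4 * t) = ((c * t - x) ^ 2 + y ^ 2) / t / 4 := by ring
    _ ≤ ((c * t - x + b * s) ^ 2 / (t + a * s) + (y + s) ^ 2 / t) / 4 := by
      gcongr
      exact add_sq_div_le_sq_div_add_sq_div ht hs hts hreg'
    _ = (-x + b * s + c * t) ^ 2 / (4 * (t + a * s)) + (y + s) ^ 2 / (4 * t) := by
      field_simp; ring

/-- On the region `y ≥ (a/(2t))(x − ct)² + b(x − ct)`, the minimum over s ≥ 0 of
`(-x + bs + ct)²/(4(t+as)) + (y+s)²/(4t)` is attained (at s = 0) and equals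
`((x − ct)² + y²)/(4t)`. -/
theorem stmt_5 (a b c t x y : ℝ) (ha : 0 < a) (hb : 0 < b) (hc : 0 < c) (ht : 0 < t)
    (hy : 0 ≤ y) (hreg : y ≥ a / (2 * t) * (x - c * t) ^ 2 + b * (x - c * t)) :
    IsLeast ((fun s : ℝ =>
        (-x + b * s + c * t) ^ 2 / (4 * (t + a * s)) + (y + s) ^ 2 / (4 * t)) '' Ici 0)
      (((x - c * t) ^ 2 + y ^ 2) / (4 * t)) :=
  stmt_5_general ha.le ht hreg
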